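/- arXiv:2207.07961 — 2 statements merged into one kernel-verified Lean document; each statement's English description precedes it below -/
import Mathlib

section
/- The Gerstenhaber bracket satisfies the graded Jacobi identity: for f ∈ C^{p+1}(A,A), g ∈ C^{q+1}(A,A), h ∈ C^{r+1}(A,A), one has [f,[g,h]_G]_G = [[f,g]_G, h]_G + (−1)^{pq} [g,[f,h]_G]_G. -/
/-- Partial (Gerstenhaber) composition: for `F ∈ C^{p+1}`, `G ∈ C^{q+1}` and `0 ≤ i ≤ p`,
`(F •_i G)(u₀,…,u_{p+q}) = F(u₀,…,u_{i−1}, G(u_i,…,u_{i+q}), u_{i+q+1},…,u_{p+q})`. -/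
def pcomp {A : Type*} [Ring A] (p q : ℕ) (i : Fin (p + 1))
    (F : (Fin (p + 1) → A) → A) (G : (Fin (q + 1) → A) → A) :
    (Fin (p + q + 1) → A) → A :=
  fun u => F (fun m =>
    if (m : ℕ) < (i : ℕ) then u ⟨(m : ℕ), by omega⟩
    else if (m : ℕ) = (i : ℕ) then G (fun l => u ⟨(i : ℕ) + (l : ℕ), by omega⟩)
    else u ⟨(m : ℕ) + q, by omega⟩)

/-- The Gerstenhaber product `F • G = Σ_{i=0}^{p} (−1)^{iq} F •_i G`. -/
def gprod {A : Type*} [Ring A] (p q : ℕ)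
    (F : (Fin (p + 1) → A) → A) (G : (Fin (q + 1) → A) → A) :
    (Fin (p + q + 1) → A) → A :=
  fun u => ∑ i : Fin (p + 1), ((-1 : ℤ) ^ ((i : ℕ) * q)) • pcomp p q i F G u

/-- Reindexing a cochain along an equality of arities. -/
def recast {A : Type*} [Ring A] {n m : ℕ} (h : n = m) (F : (Fin n → A) → A) :
    (Fin m → A) → A :=
  fun u => F (fun j => u (Fin.cast h j))

/-- The Gerstenhaber bracket `[F,G]_G = F • G − (−1)^{pq} G • F`. -/
def gbr {A : Type*} [Ring A] (p q : ℕ)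
    (F : (Fin (p + 1) → A) → A) (G : (Fin (q + 1) → A) → A) :
    (Fin (p + q + 1) → A) → A :=
  fun u => gprod p q F G u
    - ((-1 : ℤ) ^ (p * q)) • recast (by omega) (gprod q p G F) u

/-!
Write `f{g, h}` for the signed sum over `i < j` of the insertions of `g` into slot `i` and of `h`
into slot `j` of `f`. In `(f • g) • h` the cochain `h` lands either inside the inserted `g`, which
gives `f • (g • h)`, or in a slot of `f` to the right or to the left of `g`. Hence
`(f • g) • h - f • (g • h) = f{g, h} + (-1)^{qr} f{h, g}` for `g`, `h` of arities `q + 1`, `r + 1`,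
so the associator is graded symmetric in its last two arguments, and the Jacobi identity is a signed
sum of three such symmetries.
-/

theorem neg_one_pow_mul_self {R : Type*} [Monoid R] [HasDistribNeg R] (n : ℕ) :
    (-1 : R) ^ n * (-1 : R) ^ n = 1 := by
  rw [← pow_add, Even.neg_one_pow ⟨n, rfl⟩]

theorem sum_range_split_block {N : Type*} [AddCommMonoid N] {p i : ℕ} (hi : i ≤ p) (q : ℕ)
    (a : ℕ → N) :
    ∑ j ∈ Finset.range (p + q + 1), a j
      = ∑ j ∈ Finset.range i, a j + ∑ t ∈ Finset.range (q + 1), a (i + t)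
        + ∑ j ∈ Finset.Ico (i + 1) (p + 1), a (j + q) := by
  rw [Finset.sum_Ico_add', ← Finset.sum_range_add, show i + 1 + q = i + (q + 1) by ring,
    show p + 1 + q = p + q + 1 by ring, Finset.sum_range_add_sum_Ico _ (by omega)]

/-- A cochain of unspecified arity: it takes a sequence `u₀, u₁, …` of arguments, and a cochain of
arity `n` is one that only reads `u₀, …, u_{n-1}`. Leaving the arity out of the type spares the
reindexing between arities such as `p + q + r + 1` and `p + (q + r) + 1`. -/
abbrev SeqCochain (M : Type*) := (ℕ → M) → M

namespace SeqCochain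

/-- The sequence `u₀, …, u_{i-1}, x, u_{i+q+1}, …`, in which `x` replaces a block of `q + 1` entries
of `U` starting at position `i`. -/
def collapse {M : Type*} (q i : ℕ) (x : M) (U : ℕ → M) : ℕ → M :=
  fun m => if m < i then U m else if m = i then x else U (m + q)

/-- The partial composition `F •_i G`, where `G` has arity `q + 1`. -/
def partialComp {M : Type*} (q i : ℕ) (F G : SeqCochain M) : SeqCochain M :=
  fun U => F (collapse q i (G fun l => U (i + l)) U)

section PartialComp

variable {M : Type*}

theorem update_collapse (q i : ℕ) (x y : M) (U : ℕ → M) :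
    Function.update (collapse q i x U) i y = collapse q i y U := by
  ext m
  by_cases hm : m = i <;> simp [collapse, hm]

theorem collapse_collapse_of_le {q t : ℕ} (ht : t ≤ q) (r i : ℕ) (x y : M) (U : ℕ → M) :
    collapse q i x (collapse r (i + t) y U) = collapse (q + r) i x U := by
  ext m
  grind [collapse]

theorem collapse_collapse_of_lt {i j : ℕ} (hij : i < j) (q r : ℕ) (x y : M) (U : ℕ → M) :
    collapse q i x (collapse r (j + q) y U) = collapse r j y (collapse q i x U) := by
  ext m
  grind [collapse]

theorem collapse_add_apply_add (r i t : ℕ) (x : M) (U : ℕ → M) (l : ℕ) :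
    collapse r (i + t) x U (i + l) = collapse r t x (fun m => U (i + m)) l := by
  grind [collapse]

theorem collapse_apply_of_lt {j l : ℕ} (hl : l < j) (r : ℕ) (x : M) (U : ℕ → M) :
    collapse r j x U l = U l :=
  if_pos hl

theorem collapse_apply_of_gt {i l : ℕ} (hl : i < l) (q : ℕ) (x : M) (U : ℕ → M) :
    collapse q i x U l = U (l + q) := by
  grind [collapse]

theorem partialComp_partialComp_of_le {q t : ℕ} (ht : t ≤ q) (r i : ℕ) (F G H : SeqCochain M) :
    partialComp r (i + t) (partialComp q i F G) H
      = partialComp (q + r) i F (partialComp r t G H) := by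
  ext U
  simp only [partialComp, collapse_collapse_of_le ht, collapse_add_apply_add, add_assoc]

theorem partialComp_partialComp_of_lt {q i j : ℕ} (hij : i < j) (r : ℕ) (F H : SeqCochain M)
    {G : SeqCochain M} (hG : DependsOn G (Set.Iic q)) :
    partialComp r (j + q) (partialComp q i F G) H
      = partialComp q i (partialComp r j F H) G := by
  ext U
  have hG_block (x : M) :
      G (fun l => collapse r (j + q) x U (i + l)) = G (fun l => U (i + l)) :=
    hG fun l hl => collapse_apply_of_lt (by grind) r x U
  have hH_block (x : M) (l : ℕ) : collapse q i x U (j + l) = U (j + q + l) := by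
    rw [collapse_apply_of_gt (by omega), add_right_comm]
  simp only [partialComp, hG_block, hH_block, collapse_collapse_of_lt hij]

end PartialComp

/-- `F` is additive in each of the arguments `u₀, …, u_p`. -/
def IsAdditiveUpTo {M : Type*} [Add M] (p : ℕ) (F : SeqCochain M) : Prop :=
  ∀ i ≤ p, ∀ (U : ℕ → M) (x y : M),
    F (Function.update U i (x + y)) = F (Function.update U i x) + F (Function.update U i y)

theorem partialComp_add_right {M : Type*} [Add M] {p i : ℕ} {F : SeqCochain M}
    (hF : IsAdditiveUpTo p F) (hi : i ≤ p) (q : ℕ) (G G' : SeqCochain M) :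
    partialComp q i F (G + G') = partialComp q i F G + partialComp q i F G' := by
  ext U
  have hadd := hF i hi (collapse q i (U i) U) (G fun l => U (i + l)) (G' fun l => U (i + l))
  rwa [update_collapse, update_collapse, update_collapse] at hadd

section Product

variable {M : Type*} [AddCommGroup M]

/-- The Gerstenhaber product `F • G` of cochains of arities `p + 1` and `q + 1`. -/
def circ (p q : ℕ) (F G : SeqCochain M) : SeqCochain M :=
  ∑ i ∈ Finset.range (p + 1), (-1 : ℤ) ^ (i * q) • partialComp q i F G

/-- The Gerstenhaber bracket of cochains of arities `p + 1` and `q + 1`. -/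
def bracket (p q : ℕ) (F G : SeqCochain M) : SeqCochain M :=
  circ p q F G - (-1 : ℤ) ^ (p * q) • circ q p G F

/-- The associator `(F • G) • H - F • (G • H)` of the Gerstenhaber product. -/
def associator (p q r : ℕ) (F G H : SeqCochain M) : SeqCochain M :=
  circ (p + q) r (circ p q F G) H - circ p (q + r) F (circ q r G H)

/-- The brace operation `F{G, H}`: the signed sum of all insertions of `G` and `H` into `F` with `G`
to the left of `H`. The slot `j` of `F` becomes slot `j + q` once `G` has been inserted. -/
def brace (p q r : ℕ) (F G H : SeqCochain M) : SeqCochain M :=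
  ∑ i ∈ Finset.range (p + 1), ∑ j ∈ Finset.Ico (i + 1) (p + 1),
    (-1 : ℤ) ^ (i * q + (j + q) * r) • partialComp r (j + q) (partialComp q i F G) H

/-- The product `F ↦ F • G` as a homomorphism of cochain groups. -/
def circLeft (p q : ℕ) (G : SeqCochain M) : SeqCochain M →+ SeqCochain M :=
  AddMonoidHom.mk' (fun F => circ p q F G) fun F F' => by
    have hadd (i : ℕ) : partialComp q i (F + F') G = partialComp q i F G + partialComp q i F' G :=
      rfl
    simp only [circ, hadd, smul_add, Finset.sum_add_distrib]

/-- The product `G ↦ F • G` as a homomorphism of cochain groups, for `F` additive in each slot. -/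
def circRight {p : ℕ} {F : SeqCochain M} (hF : IsAdditiveUpTo p F) (q : ℕ) :
    SeqCochain M →+ SeqCochain M :=
  AddMonoidHom.mk' (circ p q F) fun G G' => by
    simp only [circ, ← Finset.sum_add_distrib, ← smul_add]
    refine Finset.sum_congr rfl fun i hi => ?_
    rw [partialComp_add_right hF (Finset.mem_range_succ_iff.mp hi)]

theorem circ_sub_left (p q : ℕ) (F F' G : SeqCochain M) :
    circ p q (F - F') G = circ p q F G - circ p q F' G :=
  map_sub (circLeft p q G) F F'

theorem circ_zsmul_left (p q : ℕ) (n : ℤ) (F G : SeqCochain M) :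
    circ p q (n • F) G = n • circ p q F G :=
  map_zsmul (circLeft p q G) n F

theorem circ_sub_right {p : ℕ} {F : SeqCochain M} (hF : IsAdditiveUpTo p F) (q : ℕ)
    (G G' : SeqCochain M) : circ p q F (G - G') = circ p q F G - circ p q F G' :=
  map_sub (circRight hF q) G G'

theorem circ_zsmul_right {p : ℕ} {F : SeqCochain M} (hF : IsAdditiveUpTo p F) (q : ℕ) (n : ℤ)
    (G : SeqCochain M) : circ p q F (n • G) = n • circ p q F G :=
  map_zsmul (circRight hF q) n G

theorem circ_sum_left {ι : Type*} (p q : ℕ) (s : Finset ι) (F : ι → SeqCochain M)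
    (G : SeqCochain M) : circ p q (∑ a ∈ s, F a) G = ∑ a ∈ s, circ p q (F a) G :=
  map_sum (circLeft p q G) F s

theorem circ_sum_right {ι : Type*} {p : ℕ} {F : SeqCochain M} (hF : IsAdditiveUpTo p F) (q : ℕ)
    (s : Finset ι) (G : ι → SeqCochain M) :
    circ p q F (∑ a ∈ s, G a) = ∑ a ∈ s, circ p q F (G a) :=
  map_sum (circRight hF q) G s

theorem circ_circ_left (p q r : ℕ) (F G H : SeqCochain M) :
    circ (p + q) r (circ p q F G) H
      = ∑ i ∈ Finset.range (p + 1), ∑ j ∈ Finset.range (p + q + 1),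
        (-1 : ℤ) ^ (i * q + j * r) • partialComp r j (partialComp q i F G) H := by
  rw [circ.eq_def p q F G, circ_sum_left]
  simp only [circ_zsmul_left]
  simp only [circ, Finset.smul_sum, smul_smul, pow_add]

theorem circ_circ_right {p : ℕ} {F : SeqCochain M} (hF : IsAdditiveUpTo p F) (q r : ℕ)
    (G H : SeqCochain M) :
    circ p (q + r) F (circ q r G H)
      = ∑ i ∈ Finset.range (p + 1), ∑ t ∈ Finset.range (q + 1),
        (-1 : ℤ) ^ (i * q + (i + t) * r) • partialComp r (i + t) (partialComp q i F G) H := by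
  rw [circ.eq_def q r G H, circ_sum_right hF, Finset.sum_comm]
  refine Finset.sum_congr rfl fun t ht => ?_
  rw [circ_zsmul_right hF, circ, Finset.smul_sum]
  refine Finset.sum_congr rfl fun i _ => ?_
  rw [partialComp_partialComp_of_le (Finset.mem_range_succ_iff.mp ht), smul_smul, ← pow_add]
  ring_nf

theorem associator_eq_brace_add_brace {p q r : ℕ} {F H : SeqCochain M} (hF : IsAdditiveUpTo p F)
    (hH : DependsOn H (Set.Iic r)) (G : SeqCochain M) :
    associator p q r F G H = brace p q r F G H + (-1 : ℤ) ^ (q * r) • brace p r q F H G := by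
  have hleft : ∑ i ∈ Finset.range (p + 1), ∑ j ∈ Finset.range i,
        (-1 : ℤ) ^ (i * q + j * r) • partialComp r j (partialComp q i F G) H
      = (-1 : ℤ) ^ (q * r) • brace p r q F H G := by
    simp only [brace, Finset.smul_sum]
    rw [Finset.sum_comm' (s' := fun j => Finset.Ico (j + 1) (p + 1)) (t' := Finset.range (p + 1))
      (by grind)]
    refine Finset.sum_congr rfl fun j _ => Finset.sum_congr rfl fun i hi => ?_
    rw [partialComp_partialComp_of_lt (Finset.mem_Ico.mp hi).1 q F G hH, smul_smul,
      show j * r + (i + r) * q = q * r + (i * q + j * r) by ring, pow_add _ (q * r), ← mul_assoc,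
      neg_one_pow_mul_self, one_mul]
  rw [← hleft, associator, sub_eq_iff_eq_add, circ_circ_left, circ_circ_right hF, brace,
    ← Finset.sum_add_distrib, ← Finset.sum_add_distrib]
  refine Finset.sum_congr rfl fun i hi => ?_
  rw [sum_range_split_block (Finset.mem_range_succ_iff.mp hi)]
  abel

theorem associator_symm {p q r : ℕ} {F G H : SeqCochain M} (hF : IsAdditiveUpTo p F)
    (hG : DependsOn G (Set.Iic q)) (hH : DependsOn H (Set.Iic r)) :
    associator p q r F G H = (-1 : ℤ) ^ (q * r) • associator p r q F H G := by
  rw [associator_eq_brace_add_brace hF hH, associator_eq_brace_add_brace hF hG, smul_add,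
    smul_smul, mul_comm r q, neg_one_pow_mul_self, one_smul, add_comm]

theorem bracket_jacobi {p q r : ℕ} {F G H : SeqCochain M}
    (hF : IsAdditiveUpTo p F) (hG : IsAdditiveUpTo q G) (hH : IsAdditiveUpTo r H)
    (hF_dep : DependsOn F (Set.Iic p)) (hG_dep : DependsOn G (Set.Iic q))
    (hH_dep : DependsOn H (Set.Iic r)) :
    bracket p (q + r) F (bracket q r G H)
      = bracket (p + q) r (bracket p q F G) H
        + (-1 : ℤ) ^ (p * q) • bracket q (p + r) G (bracket p r F H) := by
  have hFGH := associator_symm hF hG_dep hH_dep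
  have hGFH := associator_symm hG hF_dep hH_dep
  have hHFG := associator_symm hH hF_dep hG_dep
  simp only [associator] at hFGH hGFH hHFG
  simp only [bracket, circ_sub_left, circ_zsmul_left, circ_sub_right hF, circ_zsmul_right hF,
    circ_sub_right hG, circ_zsmul_right hG, circ_sub_right hH, circ_zsmul_right hH,
    add_comm q p, add_comm r p, add_comm r q] at hFGH hGFH hHFG ⊢
  -- The square of `(-1)^{pq}` occurs only in front of `(F • H) • G` and `(H • F) • G`.
  linear_combination (norm := module)
    (-1 : ℤ) ^ (p * q) • hGFH - hFGH - (-1 : ℤ) ^ (p * r + q * r) • hHFG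
    + neg_one_pow_mul_self (R := ℤ) (p * q) •
      ((-1 : ℤ) ^ (q * r) • circ (p + r) q (circ p r F H) G
        - (-1 : ℤ) ^ (p * r + q * r) • circ (p + r) q (circ r p H F) G)

end Product

section OfFin

/-- The cochain of finite arity `n` viewed as a function of sequences. -/
def ofFin {M : Type*} {n : ℕ} (F : (Fin n → M) → M) : SeqCochain M :=
  fun U => F fun j => U j

theorem ofFin_injective {M : Type*} [Nonempty M] (n : ℕ) :
    Function.Injective (ofFin : ((Fin n → M) → M) → SeqCochain M) :=
  Fin.val_injective.surjective_comp_right.injective_comp_right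

theorem dependsOn_ofFin {M : Type*} (p : ℕ) (F : (Fin (p + 1) → M) → M) :
    DependsOn (ofFin F) (Set.Iic p) :=
  fun _ _ hUV => congrArg F (funext fun j => hUV j (Nat.lt_succ_iff.mp j.isLt))

theorem isAdditiveUpTo_ofFin {R M : Type*} [Semiring R] [AddCommMonoid M] [Module R M] {p : ℕ}
    (f : MultilinearMap R (fun _ : Fin (p + 1) => M) M) : IsAdditiveUpTo p (ofFin f) := by
  intro i hi U x y
  have hupdate (z : M) : ofFin f (Function.update U i z)
      = f (Function.update (fun j : Fin (p + 1) => U j) ⟨i, Nat.lt_succ_of_le hi⟩ z) :=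
    congrArg f (Function.update_comp_eq_of_injective U Fin.val_injective
      ⟨i, Nat.lt_succ_of_le hi⟩ z)
  simp only [hupdate, f.map_update_add]

theorem ofFin_add {M : Type*} [Add M] {n : ℕ} (F G : (Fin n → M) → M) :
    ofFin (F + G) = ofFin F + ofFin G :=
  rfl

theorem ofFin_smul {R M : Type*} [SMul R M] {n : ℕ} (c : R) (F : (Fin n → M) → M) :
    ofFin (c • F) = c • ofFin F :=
  rfl

variable {A : Type*} [Ring A]

theorem ofFin_recast {n m : ℕ} (hnm : n = m) (F : (Fin n → A) → A) :
    ofFin (recast hnm F) = ofFin F :=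
  rfl

theorem ofFin_gprod (p q : ℕ) (F : (Fin (p + 1) → A) → A) (G : (Fin (q + 1) → A) → A) :
    ofFin (gprod p q F G) = circ p q (ofFin F) (ofFin G) := by
  ext U
  rw [circ, Finset.sum_apply, Finset.sum_range]
  rfl

theorem ofFin_gbr (p q : ℕ) (F : (Fin (p + 1) → A) → A) (G : (Fin (q + 1) → A) → A) :
    ofFin (gbr p q F G) = bracket p q (ofFin F) (ofFin G) := by
  rw [bracket, ← ofFin_gprod, ← ofFin_gprod]
  rfl

end OfFin

end SeqCochain

open SeqCochain in
theorem gerstenhaber_jacobi_general {R A : Type*} [Semiring R] [Ring A] [Module R A] {p q r n : ℕ}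
    (f : MultilinearMap R (fun _ : Fin (p + 1) => A) A)
    (g : MultilinearMap R (fun _ : Fin (q + 1) => A) A)
    (h : MultilinearMap R (fun _ : Fin (r + 1) => A) A)
    (hfgh : p + (q + r) + 1 = n) (hfgh' : p + q + r + 1 = n) (hgfh : q + (p + r) + 1 = n) :
    recast hfgh (gbr p (q + r) ⇑f (gbr q r ⇑g ⇑h))
      = recast hfgh' (gbr (p + q) r (gbr p q ⇑f ⇑g) ⇑h)
        + (-1 : ℤ) ^ (p * q) • recast hgfh (gbr q (p + r) ⇑g (gbr p r ⇑f ⇑h)) := by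
  apply ofFin_injective
  simp only [ofFin_add, ofFin_smul, ofFin_recast, ofFin_gbr]
  exact bracket_jacobi (isAdditiveUpTo_ofFin f) (isAdditiveUpTo_ofFin g) (isAdditiveUpTo_ofFin h)
    (dependsOn_ofFin p f) (dependsOn_ofFin q g) (dependsOn_ofFin r h)

theorem gerstenhaber_jacobi (k : Type*) [Field k] (A : Type*) [Ring A] [Algebra k A]
    (p q r : ℕ)
    (f : MultilinearMap k (fun _ : Fin (p + 1) => A) A)
    (g : MultilinearMap k (fun _ : Fin (q + 1) => A) A)
    (h : MultilinearMap k (fun _ : Fin (r + 1) => A) A) :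
    (recast (by omega) (gbr p (q + r) ⇑f (gbr q r ⇑g ⇑h)) :
        (Fin (p + q + r + 1) → A) → A)
      = recast (by omega) (gbr (p + q) r (gbr p q ⇑f ⇑g) ⇑h)
        + ((-1 : ℤ) ^ (p * q)) • recast (by omega) (gbr q (p + r) ⇑g (gbr p r ⇑f ⇑h)) :=
  gerstenhaber_jacobi_general f g h _ _ _
end

section
/- The associator of the Gerstenhaber product, A(f,g,h) := (f • g) • h − f • (g • h), satisfies the graded symmetry A(f,g,h) = (−1)^{qr} A(f,h,g) for all f ∈ C^{p+1}(A,A), g ∈ C^{q+1}(A,A), h ∈ C^{r+1}(A,A). -/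
/-!
Evaluate cochains on sequences `U : ℕ → A`, so that no arities have to be matched. Writing
`T_{g,h}(i, j)` for the signed value of `f` after inserting `h` at position `j` and then `g` at slot
`i`, the product `(f • g) • h` is the sum of all `T_{g,h}(i, j)` with `i ≤ p` and `j ≤ p + q`, while
`f • (g • h)` is the sum of those in which `h` lands inside `g`, that is `i ≤ j ≤ i + q`. In the
associator only the terms with `j < i` or `i + q < j` survive, and since `g` and `h` then occupy
disjoint places, the second family is `(-1)^{qr}` times the first with `g` and `h` exchanged.
-/

section Sequences

variable {α β : Type*}

/-- The extension of a function of `n` arguments to sequences, reading the first `n` entries. Used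
to work with cochains of different arities on a common domain. -/
def onSeq {n : ℕ} (F : (Fin n → α) → β) : (ℕ → α) → β :=
  fun U => F (fun m => U m)

lemma onSeq_injective [Nonempty α] {n : ℕ} :
    Function.Injective (onSeq : ((Fin n → α) → β) → (ℕ → α) → β) :=
  Fin.val_injective.surjective_comp_right.injective_comp_right

lemma dependsOn_onSeq {n : ℕ} (F : (Fin n → α) → β) : DependsOn (onSeq F) (Set.Iio n) :=
  fun _ _ hUV => congrArg F (funext fun m => hUV m m.isLt)

/-- The sequence `U 0, …, U (i - 1), φ (U i, U (i + 1), …), U (i + q + 1), …`: the analogue on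
sequences of inserting a `(q + 1)`-ary operation at slot `i`. That `φ` reads only `q + 1` entries is
not built in. -/
def seqInsert (i q : ℕ) (φ : (ℕ → α) → α) (U : ℕ → α) : ℕ → α :=
  fun m => if m < i then U m else if m = i then φ (fun n => U (i + n)) else U (m + q)

lemma seqInsert_of_lt {i m : ℕ} (hm : m < i) (q : ℕ) (φ : (ℕ → α) → α) (U : ℕ → α) :
    seqInsert i q φ U m = U m :=
  if_pos hm

lemma seqInsert_self (i q : ℕ) (φ : (ℕ → α) → α) (U : ℕ → α) :
    seqInsert i q φ U i = φ (fun n => U (i + n)) := by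
  simp [seqInsert]

lemma seqInsert_of_gt {i m : ℕ} (hm : i < m) (q : ℕ) (φ : (ℕ → α) → α) (U : ℕ → α) :
    seqInsert i q φ U m = U (m + q) := by
  simp [seqInsert, hm.not_gt, hm.ne']

lemma seqInsert_eq_update (i q : ℕ) (φ ψ : (ℕ → α) → α) (U : ℕ → α) :
    seqInsert i q φ U = Function.update (seqInsert i q ψ U) i (φ fun n => U (i + n)) := by
  funext m
  by_cases hm : m = i
  · subst hm
    rw [seqInsert_self, Function.update_self]
  · simp [seqInsert, hm]

lemma seqInsert_add_apply_add (i l q : ℕ) (φ : (ℕ → α) → α) (U : ℕ → α) (n : ℕ) :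
    seqInsert (i + l) q φ U (i + n) = seqInsert l q φ (fun n => U (i + n)) n := by
  simp only [seqInsert, add_assoc, add_lt_add_iff_left, add_right_inj]

lemma seqInsert_seqInsert_of_lt {a b : ℕ} (hab : a < b) (q r : ℕ) {φ : (ℕ → α) → α}
    (hφ : DependsOn φ (Set.Iio (q + 1))) (ψ : (ℕ → α) → α) (U : ℕ → α) :
    seqInsert a q φ (seqInsert (b + q) r ψ U) = seqInsert b r ψ (seqInsert a q φ U) := by
  funext m
  rcases lt_trichotomy m a with hma | rfl | ham
  · simp only [seqInsert_of_lt, hma, show m < b + q by omega, show m < b by omega]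
  · rw [seqInsert_self, seqInsert_of_lt hab, seqInsert_self]
    refine hφ fun n hn => seqInsert_of_lt ?_ r ψ U
    rw [Set.mem_Iio] at hn
    omega
  · rw [seqInsert_of_gt ham]
    rcases lt_trichotomy m b with hmb | rfl | hbm
    · rw [seqInsert_of_lt (by omega), seqInsert_of_lt hmb, seqInsert_of_gt ham]
    · simp only [seqInsert_self, seqInsert_of_gt, show ∀ n, a < m + n by omega, add_right_comm]
    · rw [seqInsert_of_gt (by omega), seqInsert_of_gt hbm, seqInsert_of_gt (by omega),
        add_right_comm]

lemma seqInsert_seqInsert_of_le {l q : ℕ} (hl : l ≤ q) (i r : ℕ) (φ ψ : (ℕ → α) → α)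
    (U : ℕ → α) :
    seqInsert i q φ (seqInsert (i + l) r ψ U)
      = seqInsert i (q + r) (fun V => φ (seqInsert l r ψ V)) U := by
  funext m
  rcases lt_trichotomy m i with hmi | rfl | him
  · simp only [seqInsert_of_lt, hmi, show m < i + l by omega]
  · simp only [seqInsert_self, seqInsert_add_apply_add]
  · rw [seqInsert_of_gt him, seqInsert_of_gt (by omega), seqInsert_of_gt him, add_assoc]

end Sequences

lemma sum_range_eq_sum_range_add_sum_range_add_sum_Ico {M : Type*} [AddCommMonoid M]
    {i p : ℕ} (hi : i ≤ p) (q : ℕ) (F : ℕ → M) :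
    ∑ j ∈ Finset.range (p + q + 1), F j
      = ∑ j ∈ Finset.range i, F j + ∑ l ∈ Finset.range (q + 1), F (i + l)
        + ∑ b ∈ Finset.Ico (i + 1) (p + 1), F (b + q) := by
  rw [Finset.sum_Ico_add' F, ← Finset.sum_range_add, Finset.range_eq_Ico,
    show i + 1 + q = i + (q + 1) by ring, show p + 1 + q = p + q + 1 by ring,
    Finset.range_eq_Ico, Finset.sum_Ico_consecutive _ (by omega) (by omega)]

section Products

variable {A : Type*} [Ring A] {p q r : ℕ}

lemma onSeq_gprod (F : (Fin (p + 1) → A) → A) (G : (Fin (q + 1) → A) → A) (U : ℕ → A) :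
    onSeq (gprod p q F G) U
      = ∑ i ∈ Finset.range (p + 1),
          (-1 : ℤ) ^ (i * q) • onSeq F (seqInsert i q (onSeq G) U) := by
  rw [Finset.sum_range]
  rfl

/-- The term `T_{g,h}(i, j)` of the double products: `H` is inserted at position `j` of the
sequence, then `G` at slot `i` of `F`. The sign is the one it carries in `(F • G) • H`. -/
def doubleInsertion (F : (Fin (p + 1) → A) → A) (G : (Fin (q + 1) → A) → A)
    (H : (Fin (r + 1) → A) → A) (U : ℕ → A) (i j : ℕ) : A :=
  (-1 : ℤ) ^ (j * r + i * q) •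
    onSeq F (seqInsert i q (onSeq G) (seqInsert j r (onSeq H) U))

lemma doubleInsertion_add_right_of_lt (F : (Fin (p + 1) → A) → A) (G : (Fin (q + 1) → A) → A)
    (H : (Fin (r + 1) → A) → A) (U : ℕ → A) {i b : ℕ} (hib : i < b) :
    doubleInsertion F G H U i (b + q)
      = (-1 : ℤ) ^ (q * r) • doubleInsertion F H G U b i := by
  rw [doubleInsertion, doubleInsertion, smul_smul, ← pow_add,
    seqInsert_seqInsert_of_lt hib q r (dependsOn_onSeq G)]
  congr 2
  ring

lemma onSeq_gprod_gprod_left (F : (Fin (p + 1) → A) → A) (G : (Fin (q + 1) → A) → A)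
    (H : (Fin (r + 1) → A) → A) (U : ℕ → A) :
    onSeq (gprod (p + q) r (gprod p q F G) H) U
      = ∑ i ∈ Finset.range (p + 1), ∑ j ∈ Finset.range (p + q + 1),
          doubleInsertion F G H U i j := by
  simp only [onSeq_gprod, Finset.smul_sum, smul_smul, ← pow_add]
  exact Finset.sum_comm

variable {R : Type*} [Semiring R] [Module R A]

lemma onSeq_seqInsert_sum_zsmul {ι : Type*} {n i : ℕ} (hi : i < n)
    (f : MultilinearMap R (fun _ : Fin n => A) A) (q : ℕ) (s : Finset ι) (c : ι → ℤ)
    (φ : ι → (ℕ → A) → A) (U : ℕ → A) :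
    onSeq f (seqInsert i q (fun V => ∑ l ∈ s, c l • φ l V) U)
      = ∑ l ∈ s, c l • onSeq f (seqInsert i q (φ l) U) := by
  have slot_linear (ψ : (ℕ → A) → A) : onSeq f (seqInsert i q ψ U)
      = f.toLinearMap (fun m => seqInsert i q 0 U m) ⟨i, hi⟩ (ψ fun n => U (i + n)) := by
    rw [seqInsert_eq_update i q ψ 0]
    exact congrArg f (Function.update_comp_eq_of_injective _ Fin.val_injective ⟨i, hi⟩ _)
  simp only [slot_linear, map_sum, map_zsmul]

lemma onSeq_gprod_gprod_right (f : MultilinearMap R (fun _ : Fin (p + 1) => A) A)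
    (G : (Fin (q + 1) → A) → A) (H : (Fin (r + 1) → A) → A) (U : ℕ → A) :
    onSeq (gprod p (q + r) f (gprod q r G H)) U
      = ∑ i ∈ Finset.range (p + 1), ∑ l ∈ Finset.range (q + 1),
          doubleInsertion f G H U i (i + l) := by
  rw [onSeq_gprod, funext (onSeq_gprod G H)]
  refine Finset.sum_congr rfl fun i hi => ?_
  rw [onSeq_seqInsert_sum_zsmul (Finset.mem_range.mp hi), Finset.smul_sum]
  refine Finset.sum_congr rfl fun l hl => ?_
  rw [doubleInsertion, seqInsert_seqInsert_of_le (Finset.mem_range_succ_iff.mp hl), smul_smul,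
    ← pow_add]
  congr 2
  ring

lemma onSeq_gprod_associator (f : MultilinearMap R (fun _ : Fin (p + 1) => A) A)
    (G : (Fin (q + 1) → A) → A) (H : (Fin (r + 1) → A) → A) (U : ℕ → A) :
    onSeq (gprod (p + q) r (gprod p q f G) H) U - onSeq (gprod p (q + r) f (gprod q r G H)) U
      = ∑ i ∈ Finset.range (p + 1), ∑ j ∈ Finset.range i, doubleInsertion f G H U i j
        + (-1 : ℤ) ^ (q * r) •
          ∑ i ∈ Finset.range (p + 1), ∑ j ∈ Finset.range i, doubleInsertion f H G U i j := by
  have right_of_block : ∑ i ∈ Finset.range (p + 1), ∑ b ∈ Finset.Ico (i + 1) (p + 1),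
      doubleInsertion f G H U i (b + q)
      = (-1 : ℤ) ^ (q * r) •
          ∑ b ∈ Finset.range (p + 1), ∑ i ∈ Finset.range b, doubleInsertion f H G U b i := by
    simp only [Finset.range_eq_Ico, Finset.smul_sum]
    rw [Finset.sum_Ico_Ico_comm']
    refine Finset.sum_congr rfl fun b _ => Finset.sum_congr rfl fun i hi => ?_
    exact doubleInsertion_add_right_of_lt f G H U (Finset.mem_Ico.mp hi).2
  rw [onSeq_gprod_gprod_left, onSeq_gprod_gprod_right, ← right_of_block,
    ← Finset.sum_sub_distrib, ← Finset.sum_add_distrib]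
  refine Finset.sum_congr rfl fun i hi => ?_
  rw [sum_range_eq_sum_range_add_sum_range_add_sum_Ico (Finset.mem_range_succ_iff.mp hi)]
  abel

theorem gerstenhaber_associator_symm_general (f : MultilinearMap R (fun _ : Fin (p + 1) => A) A)
    (g : (Fin (q + 1) → A) → A) (h : (Fin (r + 1) → A) → A) :
    (recast rfl (gprod (p + q) r (gprod p q f g) h) : (Fin (p + q + r + 1) → A) → A)
        - recast (congrArg (· + 1) (by omega)) (gprod p (q + r) f (gprod q r g h))
      = (-1 : ℤ) ^ (q * r) •
          (recast (congrArg (· + 1) (by omega)) (gprod (p + r) q (gprod p r f h) g)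
            - recast (congrArg (· + 1) (by omega)) (gprod p (r + q) f (gprod r q h g))) := by
  refine onSeq_injective (funext fun U => ?_)
  change onSeq (gprod (p + q) r (gprod p q f g) h) U
      - onSeq (gprod p (q + r) f (gprod q r g h)) U
    = (-1 : ℤ) ^ (q * r) • (onSeq (gprod (p + r) q (gprod p r f h) g) U
      - onSeq (gprod p (r + q) f (gprod r q h g)) U)
  rw [onSeq_gprod_associator, onSeq_gprod_associator, mul_comm r q, smul_add, smul_smul,
    ← mul_pow, neg_one_mul, neg_neg, one_pow, one_smul, add_comm]

end Products

/-- The associator `A(f,g,h) = (f • g) • h − f • (g • h)` of the Gerstenhaber product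
satisfies the graded symmetry `A(f,g,h) = (−1)^{qr} A(f,h,g)`. -/
theorem gerstenhaber_associator_symm (k : Type*) [Field k] (A : Type*) [Ring A] [Algebra k A]
    (p q r : ℕ)
    (f : MultilinearMap k (fun _ : Fin (p + 1) => A) A)
    (g : MultilinearMap k (fun _ : Fin (q + 1) => A) A)
    (h : MultilinearMap k (fun _ : Fin (r + 1) => A) A) :
    (recast (by omega) (gprod (p + q) r (gprod p q ⇑f ⇑g) ⇑h) :
          (Fin (p + q + r + 1) → A) → A)
        - recast (by omega) (gprod p (q + r) ⇑f (gprod q r ⇑g ⇑h))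
      = ((-1 : ℤ) ^ (q * r)) •
          (recast (by omega) (gprod (p + r) q (gprod p r ⇑f ⇑h) ⇑g)
            - recast (by omega) (gprod p (r + q) ⇑f (gprod r q ⇑h ⇑g))) :=
  gerstenhaber_associator_symm_general f g h
end
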